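/- arXiv:1211.2005 — 4 statements merged into one kernel-verified Lean document; each statement's English description precedes it below -/
import Mathlib

section
/- Let α₁, α₂ ∈ ℝ, β > −1 and 0 < c < 1, and let ρ : ℕ → ℝ be the generalized Hahn weight of type I, ρ(x) = (α₁)ₓ(α₂)ₓ cˣ / ((β+1)ₓ x!). Then ρ satisfies the Pearson equation Δ(φρ)(x) + ψ(x)ρ(x) = 0 for all x ∈ ℕ, where φ(x) = x(x+β) and ψ(x) = (1−c)x² + (β − cα₁ − cα₂)x − cα₁α₂. -/
/-- Forward difference operator on functions `ℕ → ℝ`: `Δf(x) = f(x+1) − f(x)`. -/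
def ddiff (f : ℕ → ℝ) (x : ℕ) : ℝ := f (x + 1) - f x

/-- Pochhammer symbol (ascending factorial): `(a)ₓ = a(a+1)⋯(a+x−1)`, `(a)₀ = 1`. -/
def poch (a : ℝ) : ℕ → ℝ
  | 0 => 1
  | n + 1 => poch a n * (a + n)

/-!
The weight is hypergeometric: its term ratio is
`ρ(x+1) / ρ(x) = c (x + α₁) (x + α₂) / ((x + 1) (x + 1 + β))`,
that is, `φ(x+1) ρ(x+1) = θ(x) ρ(x)` with `θ(x) = c (x + α₁) (x + α₂)`. This two-term recurrence is
the same as `Δ(φρ) + (φ - θ) ρ = 0`, and `φ - θ` is the quadratic polynomial `ψ`.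
-/

section

open scoped fwdDiff

theorem fwdDiff_mul_add_sub_mul_eq_zero_iff {R : Type*} [CommRing R] {φ θ ρ : ℕ → R} {x : ℕ} :
    Δ_[1] (φ * ρ) x + (φ x - θ x) * ρ x = 0 ↔ φ (x + 1) * ρ (x + 1) = θ x * ρ x := by
  rw [← sub_eq_zero (a := φ (x + 1) * ρ (x + 1)), fwdDiff, Pi.mul_apply, Pi.mul_apply, sub_mul,
    sub_add_sub_cancel]

variable {K : Type*} [Field K]

/-- The generalized Hahn weight of type I, `(α₁)ₓ (α₂)ₓ cˣ / ((β + 1)ₓ x!)`, over an arbitrary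
field. The Pochhammer symbols are values of Mathlib's `ascPochhammer`. Where the denominator
vanishes, division by zero gives the value `0`. -/
noncomputable def hahnIWeight (α₁ α₂ β c : K) (x : ℕ) : K :=
  (ascPochhammer K x).eval α₁ * (ascPochhammer K x).eval α₂ * c ^ x /
    ((ascPochhammer K x).eval (β + 1) * (x.factorial : K))

theorem hahnIWeight_succ (α₁ α₂ β c : K) (x : ℕ) :
    hahnIWeight α₁ α₂ β c (x + 1) =
      c * (x + α₁) * (x + α₂) / ((x + 1) * (x + 1 + β)) * hahnIWeight α₁ α₂ β c x := by
  simp only [hahnIWeight, ascPochhammer_succ_eval, Nat.factorial_succ, Nat.cast_mul,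
    Nat.cast_succ, pow_succ, div_mul_div_comm]
  congr 1 <;> ring

theorem mul_hahnIWeight_succ [CharZero K] (α₁ α₂ c : K) {β : K} {x : ℕ}
    (hx : (x : K) + 1 + β ≠ 0) :
    ((x : K) + 1) * (x + 1 + β) * hahnIWeight α₁ α₂ β c (x + 1) =
      c * (x + α₁) * (x + α₂) * hahnIWeight α₁ α₂ β c x := by
  rw [hahnIWeight_succ, ← mul_assoc,
    mul_div_cancel₀ _ (mul_ne_zero (Nat.cast_add_one_ne_zero x) hx)]

theorem generalized_hahnI_pearson_general [CharZero K] (α₁ α₂ c : K) {β : K}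
    (hβ : ∀ n : ℕ, β + 1 ≠ -n) (x : ℕ) :
    Δ_[1] (fun y : ℕ => (y : K) * ((y : K) + β) * hahnIWeight α₁ α₂ β c y) x
      + ((1 - c) * (x : K) ^ 2 + (β - c * α₁ - c * α₂) * (x : K) - c * α₁ * α₂)
        * hahnIWeight α₁ α₂ β c x = 0 := by
  let φ : ℕ → K := fun y => y * (y + β)
  let θ : ℕ → K := fun y => c * (y + α₁) * (y + α₂)
  have hx : (x : K) + 1 + β ≠ 0 := fun h => hβ x (by linear_combination h)
  have recurrence : φ (x + 1) * hahnIWeight α₁ α₂ β c (x + 1) =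
      θ x * hahnIWeight α₁ α₂ β c x := by
    simpa only [φ, θ, Nat.cast_succ] using mul_hahnIWeight_succ α₁ α₂ c hx
  have hψ : (1 - c) * (x : K) ^ 2 + (β - c * α₁ - c * α₂) * (x : K) - c * α₁ * α₂ =
      φ x - θ x := by
    simp only [φ, θ]
    ring
  rw [hψ]
  exact fwdDiff_mul_add_sub_mul_eq_zero_iff.mpr recurrence

theorem poch_eq_ascPochhammer_eval (a : ℝ) (n : ℕ) : poch a n = (ascPochhammer ℝ n).eval a := by
  induction n with
  | zero => simp [poch]
  | succ n ih => rw [poch, ih, ascPochhammer_succ_eval]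

end

/-- The generalized Hahn weight of type I, `ρ(x) = (α₁)ₓ(α₂)ₓ cˣ/((β+1)ₓ x!)`
(with `β > −1`, `0 < c < 1`), satisfies the Pearson equation `Δ(φρ) + ψρ = 0` with
`φ(x) = x(x+β)` and `ψ(x) = (1−c)x² + (β − cα₁ − cα₂)x − cα₁α₂`. -/
theorem generalized_hahnI_pearson (α₁ α₂ β c : ℝ) (hβ : -1 < β) (hc0 : 0 < c) (hc1 : c < 1)
    (ρ : ℕ → ℝ)
    (hρ : ∀ x : ℕ,
      ρ x = poch α₁ x * poch α₂ x * c ^ x / (poch (β + 1) x * (Nat.factorial x : ℝ))) :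
    ∀ x : ℕ, ddiff (fun y : ℕ => (y : ℝ) * ((y : ℝ) + β) * ρ y) x
      + ((1 - c) * (x : ℝ) ^ 2 + (β - c * α₁ - c * α₂) * (x : ℝ) - c * α₁ * α₂) * ρ x = 0 := by
  obtain rfl : ρ = hahnIWeight α₁ α₂ β c :=
    funext fun x => by simp only [hρ, hahnIWeight, poch_eq_ascPochhammer_eval]
  exact generalized_hahnI_pearson_general α₁ α₂ c fun n => by linarith [n.cast_nonneg (α := ℝ)]
end

section
/- Let N ∈ ℕ, α₁, α₂ ∈ ℝ, and β₁, β₂ ∈ ℝ with β₁ + 1 and β₂ + 1 not equal to any nonpositive integer. Let ρ : ℕ → ℝ be the generalized Hahn weight of type II, ρ(x) = (α₁)ₓ(α₂)ₓ(−N)ₓ / ((β₁+1)ₓ(β₂+1)ₓ x!). Then ρ satisfies the Pearson equation Δ(φρ)(x) + ψ(x)ρ(x) = 0 for all x ∈ ℕ, where φ(x) = x(x+β₁)(x+β₂) and ψ(x) = (β₁ + β₂ − α₁ − α₂ + N)x² + (β₁β₂ + α₁N − α₁α₂ + α₂N)x + α₁α₂N. -/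
theorem ddiff_mul_add_mul_eq_zero_iff (φ ψ ρ : ℕ → ℝ) (x : ℕ) :
    ddiff (fun y => φ y * ρ y) x + ψ x * ρ x = 0 ↔
      φ (x + 1) * ρ (x + 1) = (φ x - ψ x) * ρ x := by
  rw [ddiff, sub_add_eq_add_sub, sub_eq_zero, sub_mul, eq_sub_iff_add_eq]

section HypergeomWeight

variable {ι κ : Type*} [Fintype ι] [Fintype κ]

/-- The generalized hypergeometric weight `∏ᵢ (aᵢ)ₓ / (∏ⱼ (bⱼ + 1)ₓ x!)`, of which the generalized
Hahn weights are special cases. The denominator parameters are shifted by one as in the usual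
notation for these weights. -/
noncomputable def hypergeomWeight (a : ι → ℝ) (b : κ → ℝ) (x : ℕ) : ℝ :=
  (∏ i, poch (a i) x) / ((∏ j, poch (b j + 1) x) * x.factorial)

theorem hypergeomWeight_succ (a : ι → ℝ) (b : κ → ℝ) (x : ℕ) :
    hypergeomWeight a b (x + 1) =
      hypergeomWeight a b x * ((∏ i, (a i + x)) / ((∏ j, (b j + 1 + x)) * (x + 1))) := by
  simp only [hypergeomWeight, poch, Finset.prod_mul_distrib, Nat.factorial_succ, Nat.cast_mul,
    Nat.cast_succ]
  rw [mul_comm ((x : ℝ) + 1), mul_mul_mul_comm, mul_div_mul_comm]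

theorem mul_prod_mul_hypergeomWeight_succ (a : ι → ℝ) {b : κ → ℝ} {x : ℕ}
    (hb : ∀ j, b j + 1 + x ≠ 0) :
    ((x + 1 : ℕ) * ∏ j, ((x + 1 : ℕ) + b j)) * hypergeomWeight a b (x + 1) =
      (∏ i, (a i + x)) * hypergeomWeight a b x := by
  have hprod : ∏ j, (b j + 1 + x) ≠ 0 := Finset.prod_ne_zero_iff.mpr fun j _ => hb j
  have hshift : ∏ j, ((x + 1 : ℕ) + b j) = ∏ j, (b j + 1 + x) :=
    Finset.prod_congr rfl fun j _ => by push_cast; ring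
  rw [hypergeomWeight_succ, hshift]
  push_cast
  field_simp

theorem hypergeomWeight_pearson (a : ι → ℝ) {b : κ → ℝ} {x : ℕ} (hb : ∀ j, b j + 1 + x ≠ 0) :
    ddiff (fun y => (y * ∏ j, (y + b j)) * hypergeomWeight a b y) x +
      (x * ∏ j, (x + b j) - ∏ i, (a i + x)) * hypergeomWeight a b x = 0 := by
  rw [ddiff_mul_add_mul_eq_zero_iff (fun y => y * ∏ j, (y + b j))
    (fun y => y * ∏ j, (y + b j) - ∏ i, (a i + y)), sub_sub_cancel]
  exact mul_prod_mul_hypergeomWeight_succ a hb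

end HypergeomWeight

theorem generalized_hahnII_pearson_general (ν α₁ α₂ β₁ β₂ : ℝ)
    (hβ₁ : ∀ k : ℕ, β₁ + 1 ≠ -(k : ℝ)) (hβ₂ : ∀ k : ℕ, β₂ + 1 ≠ -(k : ℝ)) (ρ : ℕ → ℝ)
    (hρ : ∀ x : ℕ,
      ρ x = poch α₁ x * poch α₂ x * poch (-ν) x
        / (poch (β₁ + 1) x * poch (β₂ + 1) x * (Nat.factorial x : ℝ))) :
    ∀ x : ℕ, ddiff (fun y : ℕ => (y : ℝ) * ((y : ℝ) + β₁) * ((y : ℝ) + β₂) * ρ y) x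
      + ((β₁ + β₂ - α₁ - α₂ + ν) * (x : ℝ) ^ 2
        + (β₁ * β₂ + α₁ * ν - α₁ * α₂ + α₂ * ν) * (x : ℝ) + α₁ * α₂ * ν) * ρ x = 0 := by
  intro x
  have hρ_eq : ρ = hypergeomWeight ![α₁, α₂, -ν] ![β₁, β₂] := by
    funext y
    simp [hρ, hypergeomWeight, Fin.prod_univ_three]
  have hβ : ∀ j, ![β₁, β₂] j + 1 + (x : ℝ) ≠ 0 := Fin.forall_fin_two.mpr
    ⟨mt eq_neg_of_add_eq_zero_left (hβ₁ x), mt eq_neg_of_add_eq_zero_left (hβ₂ x)⟩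
  have hpearson := hypergeomWeight_pearson ![α₁, α₂, -ν] hβ
  simp only [← hρ_eq, Fin.prod_univ_three, Fin.prod_univ_two, Matrix.cons_val, ← mul_assoc]
    at hpearson
  linear_combination hpearson

/-- The generalized Hahn weight of type II,
`ρ(x) = (α₁)ₓ(α₂)ₓ(−N)ₓ/((β₁+1)ₓ(β₂+1)ₓ x!)`, satisfies the Pearson equation
`Δ(φρ) + ψρ = 0` with `φ(x) = x(x+β₁)(x+β₂)` and
`ψ(x) = (β₁+β₂−α₁−α₂+N)x² + (β₁β₂ + α₁N − α₁α₂ + α₂N)x + α₁α₂N`. -/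
theorem generalized_hahnII_pearson (N : ℕ) (α₁ α₂ β₁ β₂ : ℝ)
    (hβ₁ : ∀ k : ℕ, β₁ + 1 ≠ -(k : ℝ)) (hβ₂ : ∀ k : ℕ, β₂ + 1 ≠ -(k : ℝ)) (ρ : ℕ → ℝ)
    (hρ : ∀ x : ℕ,
      ρ x = poch α₁ x * poch α₂ x * poch (-(N : ℝ)) x
        / (poch (β₁ + 1) x * poch (β₂ + 1) x * (Nat.factorial x : ℝ))) :
    ∀ x : ℕ, ddiff (fun y : ℕ => (y : ℝ) * ((y : ℝ) + β₁) * ((y : ℝ) + β₂) * ρ y) x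
      + ((β₁ + β₂ - α₁ - α₂ + N) * (x : ℝ) ^ 2
        + (β₁ * β₂ + α₁ * N - α₁ * α₂ + α₂ * N) * (x : ℝ) + α₁ * α₂ * N) * ρ x = 0 :=
  generalized_hahnII_pearson_general N α₁ α₂ β₁ β₂ hβ₁ hβ₂ ρ hρ
end

section
/- Let c > 0 and M ∈ ℝ, and define ρ̃ : ℕ → ℝ by ρ̃(x) = cˣ/x! + M·δ₀(x), where δ₀(x) = 1 if x = 0 and 0 otherwise. Then ρ̃ satisfies the Pearson equation Δ[(x−1)x·ρ̃](x) + (x − (c+1))·x·ρ̃(x) = 0 for all x ∈ ℕ, where (x−1)x·ρ̃ denotes the function y ↦ (y−1)y·ρ̃(y). -/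
/-!
A Pearson equation `Δ(σρ) + τρ = 0` says that `σ(x+1) ρ(x+1) = (σ(x) - τ(x)) ρ(x)`. For
`σ(x) = (x-1)x` and `τ(x) = (x-(c+1))x` this is the recurrence `(x+1) ρ(x+1) = c ρ(x)` of the
Charlier weight, multiplied by `x`. The factor `x` makes the equation void at `x = 0`, so the
value of `ρ` at `0`, and with it the mass `M`, is irrelevant.
-/

theorem fwdDiff_mul_add_mul_eq_zero_iff {A R : Type*} [AddCommMonoid A]
    [NonUnitalNonAssocRing R] (h : A) (σ τ ρ : A → R) (x : A) :
    fwdDiff h (fun y ↦ σ y * ρ y) x + τ x * ρ x = 0 ↔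
      σ (x + h) * ρ (x + h) = (σ x - τ x) * ρ x := by
  rw [fwdDiff, sub_mul, ← sub_eq_zero (b := _ - _), sub_add]

theorem charlier_pearson_of_recurrence {R : Type*} [CommRing R] {c : R} {ρ : ℕ → R}
    (hρ : ∀ x : ℕ, x ≠ 0 → ((x : R) + 1) * ρ (x + 1) = c * ρ x) (x : ℕ) :
    fwdDiff 1 (fun y : ℕ ↦ ((y : R) - 1) * y * ρ y) x + ((x : R) - (c + 1)) * x * ρ x = 0 := by
  rw [fwdDiff_mul_add_mul_eq_zero_iff 1 (fun y : ℕ ↦ ((y : R) - 1) * y)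
    (fun y : ℕ ↦ ((y : R) - (c + 1)) * y)]
  rcases eq_or_ne x 0 with rfl | hx
  · simp
  · calc
      (((x + 1 : ℕ) : R) - 1) * (x + 1 : ℕ) * ρ (x + 1) = x * (((x : R) + 1) * ρ (x + 1)) := by
        push_cast; ring
      _ = x * (c * ρ x) := by rw [hρ x hx]
      _ = (((x : R) - 1) * x - ((x : R) - (c + 1)) * x) * ρ x := by ring

section Field

variable {K : Type*} [Field K] [CharZero K]

theorem add_one_mul_pow_succ_div_factorial_succ (c : K) (x : ℕ) :
    ((x : K) + 1) * (c ^ (x + 1) / (x + 1).factorial) = c * (c ^ x / x.factorial) := by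
  have hx : (x : K) + 1 ≠ 0 := Nat.cast_add_one_ne_zero x
  rw [Nat.factorial_succ, Nat.cast_mul, Nat.cast_add_one, pow_succ', ← mul_div_assoc,
    mul_div_mul_left _ _ hx, mul_div_assoc]

theorem charlier_dirac_pearson_general (c M : K) (ρ : ℕ → K)
    (hρ : ∀ x : ℕ, ρ x = c ^ x / (x.factorial : K) + M * (if x = 0 then 1 else 0)) (x : ℕ) :
    fwdDiff 1 (fun y : ℕ ↦ ((y : K) - 1) * y * ρ y) x + ((x : K) - (c + 1)) * x * ρ x = 0 := by
  have hρ_of_ne_zero (y : ℕ) (hy : y ≠ 0) : ρ y = c ^ y / (y.factorial : K) := by simp [hρ, hy]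
  refine charlier_pearson_of_recurrence (fun y hy ↦ ?_) x
  rw [hρ_of_ne_zero y hy, hρ_of_ne_zero (y + 1) y.succ_ne_zero,
    add_one_mul_pow_succ_div_factorial_succ]

end Field

/-- The Charlier weight with an added mass `M` at `0`,
`ρ̃(x) = cˣ/x! + M·δ₀(x)`, satisfies the Pearson equation
`Δ[(x−1)x·ρ̃](x) + (x − (c+1))·x·ρ̃(x) = 0` for all `x ∈ ℕ`. -/
theorem charlier_dirac_pearson (c M : ℝ) (hc : 0 < c) (ρ : ℕ → ℝ)
    (hρ : ∀ x : ℕ,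
      ρ x = c ^ x / (Nat.factorial x : ℝ) + M * (if x = 0 then (1 : ℝ) else 0)) :
    ∀ x : ℕ, ddiff (fun y : ℕ => ((y : ℝ) - 1) * (y : ℝ) * ρ y) x
      + ((x : ℝ) - (c + 1)) * (x : ℝ) * ρ x = 0 :=
  charlier_dirac_pearson_general c M ρ hρ
end

section
/- Let {bₙ}ₙ≥₀ and {γₙ}ₙ≥₀ be sequences of complex numbers with γₙ ≠ 0 for every n ∈ ℕ, and let {Pₙ(x)}ₙ≥₀ be the sequence of monic polynomials in ℂ[x] defined by the three-term recurrence P₋₁ = 0, P₀ = 1, P_{n+1}(x) = (x − bₙ)Pₙ(x) − γₙP_{n−1}(x). Then there exists a unique linear functional L : ℂ[x] → ℂ such that L(1) = γ₀ and L(P_k · Pₙ) = γ₀γ₁⋯γₙ · δ_{k,n} for all k, n ∈ ℕ. -/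
open Polynomial

/-!
Let `J` be the Jacobi operator, the tridiagonal operator on finitely supported sequences that
encodes the recurrence. The recurrence says exactly that `Pₙ(J) e₀ = eₙ`. Moreover `J` is
self-adjoint for the form `⟨eₖ, eₙ⟩ = wₙ δ_{k,n}` with `wₙ = γ₀ ⋯ γₙ`, because
`wₙ₊₁ = wₙ γₙ₊₁`. So `L p = ⟨e₀, p(J) e₀⟩` satisfies
`L(Pₖ Pₙ) = ⟨Pₖ(J) e₀, Pₙ(J) e₀⟩ = ⟨eₖ, eₙ⟩`. Conversely, the span of the `Pₙ` contains `1` and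
is stable under multiplication by `X`, so it is all of `R[X]`, and the values
`L(Pₙ) = L(P₀ Pₙ)` determine `L`.
-/

theorem isSelfAdjoint_aeval {R M N : Type*} [CommSemiring R] [AddCommMonoid M] [Module R M]
    [AddCommMonoid N] [Module R N] {B : M →ₗ[R] M →ₗ[R] N} {f : Module.End R M}
    (hf : B.IsSelfAdjoint f) (p : R[X]) : B.IsSelfAdjoint (aeval f p) := by
  intro x y
  have hpow (n : ℕ) : ∀ x y, B ((f ^ n) x) y = B x ((f ^ n) y) := by
    induction n with
    | zero => exact LinearMap.isAdjointPair_one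
    | succ n ih =>
      intro x y
      rw [pow_succ, Module.End.mul_apply, ih, hf, ← Module.End.mul_apply, (Commute.self_pow f n).eq]
  induction p using Polynomial.induction_on' with
  | add p q hp hq => simp only [map_add, LinearMap.add_apply, hp, hq]
  | monomial n a => simp [aeval_monomial, hpow n x y]

section WeightedPairing

open Finsupp

variable {ι R : Type*} [CommSemiring R]

/-- The bilinear form on finitely supported families for which the standard basis vectors `eᵢ` are
orthogonal and `⟨eᵢ, eᵢ⟩ = w i`. -/
noncomputable def weightedPairing (w : ι → R) : LinearMap.BilinForm R (ι →₀ R) :=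
  linearCombination R fun i ↦ w i • lapply i

theorem weightedPairing_single_left (w : ι → R) (i : ι) (a : R) (y : ι →₀ R) :
    weightedPairing w (single i a) y = a * (w i * y i) := by
  simp [weightedPairing]

theorem weightedPairing_single_right (w : ι → R) (x : ι →₀ R) (i : ι) (a : R) :
    weightedPairing w x (single i a) = x i * (w i * a) := by
  induction x using Finsupp.induction_linear with
  | zero => simp
  | add x y hx hy => simp [hx, hy, add_mul]
  | single j c =>
    obtain rfl | hji := eq_or_ne j i
    · simp [weightedPairing_single_left]
    · simp [weightedPairing_single_left, hji, hji.symm]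

end WeightedPairing

section JacobiOperator

open Finsupp

variable {R : Type*} [CommSemiring R]

/-- The Jacobi operator on finitely supported sequences: `J eₙ = eₙ₊₁ + bₙ eₙ + γₙ eₙ₋₁`, where
`e₋₁ = 0`. It is multiplication by `X` in the coordinates given by the polynomials `Pₙ`. -/
noncomputable def jacobiOperator (b γ : ℕ → R) : Module.End R (ℕ →₀ R) :=
  linearCombination R fun
    | 0 => single 1 1 + single 0 (b 0)
    | n + 1 => single (n + 2) 1 + single (n + 1) (b (n + 1)) + single n (γ (n + 1))

theorem jacobiOperator_single_zero (b γ : ℕ → R) :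
    jacobiOperator b γ (single 0 1) = single 1 1 + single 0 (b 0) := by
  simp [jacobiOperator]

theorem jacobiOperator_single_succ (b γ : ℕ → R) (n : ℕ) :
    jacobiOperator b γ (single (n + 1) 1) =
      single (n + 2) 1 + single (n + 1) (b (n + 1)) + single n (γ (n + 1)) := by
  simp [jacobiOperator]

theorem jacobiOperator_single_apply (b γ : ℕ → R) (k n : ℕ) :
    jacobiOperator b γ (single k 1) n =
      if n = k + 1 then 1 else if n = k then b k else if n + 1 = k then γ k else 0 := by
  rcases k with _ | k
  · simp only [jacobiOperator_single_zero, Finsupp.add_apply, single_apply]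
    split_ifs <;> first | omega | contradiction | simp
  · simp only [jacobiOperator_single_succ, Finsupp.add_apply, single_apply]
    split_ifs <;> first | omega | simp

theorem isSelfAdjoint_jacobiOperator (b : ℕ → R) {γ w : ℕ → R}
    (hw : ∀ n, w (n + 1) = w n * γ (n + 1)) :
    (weightedPairing w).IsSelfAdjoint (jacobiOperator b γ) := by
  have hsymm (k n : ℕ) :
      jacobiOperator b γ (single k 1) n * w n = w k * jacobiOperator b γ (single n 1) k := by
    simp only [jacobiOperator_single_apply]
    obtain rfl | rfl | rfl | ⟨h₁, h₂, h₃⟩ :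
        n = k + 1 ∨ n = k ∨ n + 1 = k ∨ n ≠ k + 1 ∧ n ≠ k ∧ n + 1 ≠ k := by omega
    · simp [hw, show k ≠ k + 1 + 1 by omega]
    · simp [mul_comm]
    · simp [hw, show n ≠ n + 1 + 1 by omega, mul_comm]
    · simp [h₁, h₁.symm, h₂, h₂.symm, h₃, h₃.symm]
  refine LinearMap.isAdjointPair_iff_comp_eq_compl₂.mpr
    (LinearMap.ext_basis Finsupp.basisSingleOne Finsupp.basisSingleOne fun k n ↦ ?_)
  simpa [weightedPairing_single_left, weightedPairing_single_right] using hsymm k n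

end JacobiOperator

section FavardFunctional

open Finsupp

variable {R : Type*} [CommSemiring R]

/-- The moment functional `p ↦ ⟨e₀, p(J) e₀⟩` of the Jacobi operator `J`, for the form with
`⟨eₙ, eₙ⟩ = γ₀ ⋯ γₙ`. -/
noncomputable def favardFunctional (b γ : ℕ → R) : R[X] →ₗ[R] R :=
  weightedPairing (fun n ↦ ∏ i ∈ Finset.range (n + 1), γ i) (single 0 1) ∘ₗ
    LinearMap.applyₗ (single 0 1) ∘ₗ (aeval (jacobiOperator b γ)).toLinearMap

theorem favardFunctional_apply_one (b γ : ℕ → R) : favardFunctional b γ 1 = γ 0 := by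
  simp [favardFunctional, weightedPairing_single_left]

theorem favardFunctional_mul_eq_weightedPairing (b γ : ℕ → R) (p q : R[X]) :
    favardFunctional b γ (p * q) =
      weightedPairing (fun n ↦ ∏ i ∈ Finset.range (n + 1), γ i)
        (aeval (jacobiOperator b γ) p (single 0 1))
        (aeval (jacobiOperator b γ) q (single 0 1)) := by
  have hJ := isSelfAdjoint_jacobiOperator b (γ := γ)
    (w := fun n ↦ ∏ i ∈ Finset.range (n + 1), γ i)
    fun n ↦ Finset.prod_range_succ γ (n + 1)
  rw [isSelfAdjoint_aeval hJ p]
  simp [favardFunctional]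

end FavardFunctional

/-- The sequence `P` is generated by the three-term recurrence `P₋₁ = 0`, `P₀ = 1`,
`Pₙ₊₁ = (X - bₙ) Pₙ - γₙ Pₙ₋₁`; the step from `P₀` to `P₁` is a separate field so that no index
`-1` occurs. -/
structure ThreeTermRecurrence {R : Type*} [CommRing R] (b γ : ℕ → R) (P : ℕ → R[X]) : Prop where
  zero : P 0 = 1
  one : P 1 = (X - C (b 0)) * P 0
  add_two (n : ℕ) : P (n + 2) = (X - C (b (n + 1))) * P (n + 1) - C (γ (n + 1)) * P n

namespace ThreeTermRecurrence

open Finsupp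

variable {R : Type*} [CommRing R] {b γ : ℕ → R} {P : ℕ → R[X]}

theorem aeval_jacobiOperator (hP : ThreeTermRecurrence b γ P) (n : ℕ) :
    aeval (jacobiOperator b γ) (P n) (single 0 1) = single n 1 := by
  induction n using Nat.twoStepInduction with
  | zero => simp [hP.zero]
  | one => simp [hP.one, hP.zero, jacobiOperator_single_zero]
  | more n ihn ihn' =>
    simp only [hP.add_two, map_sub, map_mul, aeval_X, aeval_C, LinearMap.sub_apply,
      Module.End.mul_apply, Module.algebraMap_end_apply, ihn, ihn', jacobiOperator_single_succ,
      smul_single, smul_eq_mul, mul_one]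
    abel

theorem favardFunctional_mul (hP : ThreeTermRecurrence b γ P) (k n : ℕ) :
    favardFunctional b γ (P k * P n) =
      if k = n then ∏ i ∈ Finset.range (n + 1), γ i else 0 := by
  simp [favardFunctional_mul_eq_weightedPairing, hP.aeval_jacobiOperator,
    weightedPairing_single_right, single_apply]

theorem X_mul_zero (hP : ThreeTermRecurrence b γ P) : X * P 0 = P 1 + b 0 • P 0 := by
  rw [hP.one, smul_eq_C_mul]
  ring

theorem X_mul_succ (hP : ThreeTermRecurrence b γ P) (n : ℕ) :
    X * P (n + 1) = P (n + 2) + b (n + 1) • P (n + 1) + γ (n + 1) • P n := by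
  rw [hP.add_two, smul_eq_C_mul, smul_eq_C_mul]
  ring

theorem X_mul_mem_span (hP : ThreeTermRecurrence b γ P) {p : R[X]}
    (hp : p ∈ Submodule.span R (Set.range P)) : X * p ∈ Submodule.span R (Set.range P) := by
  have hmem (n : ℕ) : P n ∈ Submodule.span R (Set.range P) :=
    Submodule.subset_span (Set.mem_range_self n)
  induction hp using Submodule.span_induction with
  | mem _ h =>
    obtain ⟨_ | n, rfl⟩ := h
    · rw [hP.X_mul_zero]
      exact add_mem (hmem 1) (Submodule.smul_mem _ _ (hmem 0))
    · rw [hP.X_mul_succ]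
      exact add_mem (add_mem (hmem _) (Submodule.smul_mem _ _ (hmem _)))
        (Submodule.smul_mem _ _ (hmem n))
  | zero => simp
  | add p q _ _ hp hq => simpa only [mul_add] using add_mem hp hq
  | smul a p _ hp => simpa only [mul_smul_comm] using Submodule.smul_mem _ a hp

theorem span_eq_top (hP : ThreeTermRecurrence b γ P) :
    Submodule.span R (Set.range P) = ⊤ := by
  have hpow (n : ℕ) : X ^ n ∈ Submodule.span R (Set.range P) := by
    induction n with
    | zero => exact Submodule.subset_span ⟨0, by rw [hP.zero, pow_zero]⟩
    | succ n ih => exact pow_succ' (X : R[X]) n ▸ hP.X_mul_mem_span ih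
  refine Submodule.eq_top_iff'.mpr fun p ↦ ?_
  rw [p.as_sum_range_C_mul_X_pow]
  refine sum_mem fun n _ ↦ ?_
  rw [← smul_eq_C_mul]
  exact Submodule.smul_mem _ _ (hpow n)

end ThreeTermRecurrence

theorem favard_existence_uniqueness_general {R : Type*} [CommRing R] {b γ : ℕ → R}
    {P : ℕ → R[X]} (hP : ThreeTermRecurrence b γ P) :
    ∃! L : R[X] →ₗ[R] R,
      L 1 = γ 0 ∧
      ∀ k n : ℕ, L (P k * P n) =
        if k = n then ∏ i ∈ Finset.range (n + 1), γ i else 0 := by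
  refine ⟨favardFunctional b γ, ⟨favardFunctional_apply_one b γ, hP.favardFunctional_mul⟩, ?_⟩
  rintro L ⟨-, hL⟩
  refine LinearMap.ext_on_range hP.span_eq_top fun n ↦ ?_
  calc L (P n) = L (P 0 * P n) := by rw [hP.zero, one_mul]
    _ = favardFunctional b γ (P 0 * P n) := by rw [hL, hP.favardFunctional_mul]
    _ = favardFunctional b γ (P n) := by rw [hP.zero, one_mul]

/-- Favard's theorem: given the monic polynomials `Pₙ` generated by the three-term
recurrence `P₋₁ = 0`, `P₀ = 1`, `P_{n+1} = (x − bₙ)Pₙ − γₙP_{n−1}` with all `γₙ ≠ 0`,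
there is a unique linear functional `L : ℂ[x] → ℂ` with `L(1) = γ₀` and
`L(PₖPₙ) = γ₀γ₁⋯γₙ δ_{k,n}`. -/
theorem favard_existence_uniqueness (b γ : ℕ → ℂ) (hγ : ∀ n : ℕ, γ n ≠ 0)
    (P : ℕ → Polynomial ℂ)
    (hP0 : P 0 = 1)
    (hP1 : P 1 = (X - C (b 0)) * P 0)
    (hPrec : ∀ n : ℕ,
      P (n + 2) = (X - C (b (n + 1))) * P (n + 1) - C (γ (n + 1)) * P n) :
    ∃! L : Polynomial ℂ →ₗ[ℂ] ℂ,
      L 1 = γ 0 ∧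
      ∀ k n : ℕ, L (P k * P n) =
        if k = n then ∏ i ∈ Finset.range (n + 1), γ i else 0 := by
  exact favard_existence_uniqueness_general ⟨hP0, hP1, hPrec⟩
end
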